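/- Let A be a matrix-valued function of a real parameter h, analytic in h and hermitian for all real h, on a finite-dimensional complex inner product space. Then the eigenvalues of A(h) can be chosen to be real-analytic functions of h. -/

import Mathlib

open Polynomial Filter Topology
open scoped ContDiff

namespace Rellich

/-- low part -/
noncomputable def low (k : ℕ) (a : Fin k → ℝ) : ℝ[X] := ∑ i : Fin k, C (a i) * X ^ (i : ℕ)

lemma low_degree (k : ℕ) (a : Fin k → ℝ) : (low k a).degree < k := degree_sum_fin_lt a

lemma low_coeff (k : ℕ) (a : Fin k → ℝ) (j : ℕ) :
    (low k a).coeff j = if h : j < k then a ⟨j, h⟩ else 0 := by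
  unfold low
  simp only [finsetSum_coeff, coeff_C_mul, coeff_X_pow]
  split_ifs with h
  · rw [Finset.sum_eq_single ⟨j, h⟩]
    · simp
    · intro b _ hb
      have : j ≠ b := fun e => hb (Fin.ext e.symm)
      simp [this]
    · simp
  · apply Finset.sum_eq_zero
    intro b _
    have : j ≠ b := by have := b.2; omega
    simp [this]

lemma low_add_smul (k : ℕ) (a u : Fin k → ℝ) (t : ℝ) :
    low k (a + t • u) = low k a + C t * low k u := by
  ext j; simp only [low_coeff, coeff_add, coeff_C_mul]; split_ifs <;> simp

noncomputable def mk (k : ℕ) (a : Fin k → ℝ) : ℝ[X] := X ^ k + low k a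

lemma mk_monic (k : ℕ) (a : Fin k → ℝ) : (mk k a).Monic := monic_X_pow_add (low_degree k a)

lemma mk_degree (k : ℕ) (a : Fin k → ℝ) : (mk k a).degree = k := by
  unfold mk
  rw [degree_add_eq_left_of_degree_lt] <;> simp [low_degree]

lemma mk_natDegree (k : ℕ) (a : Fin k → ℝ) : (mk k a).natDegree = k :=
  natDegree_eq_of_degree_eq_some (mk_degree k a)

lemma mk_coeff (k : ℕ) (a : Fin k → ℝ) (j : ℕ) :
    (mk k a).coeff j = (if j = k then 1 else 0) + if h : j < k then a ⟨j, h⟩ else 0 := by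
  simp [mk, low_coeff, coeff_X_pow]

lemma mk_of_monic {k : ℕ} {f : ℝ[X]} (hf : f.Monic) (hk : f.natDegree = k) :
    f = mk k (fun i => f.coeff i) := by
  ext j
  rw [mk_coeff]
  rcases lt_trichotomy j k with h | h | h
  · simp [h, h.ne]
  · subst h; simp [← hk]; exact hf
  · rw [coeff_eq_zero_of_natDegree_lt (by omega)]
    simp [h.ne', not_lt.2 h.le]

lemma monic_ext {n : ℕ} {f g : ℝ[X]} (hf : f.Monic) (hg : g.Monic) (hfn : f.natDegree = n)
    (hgn : g.natDegree = n) (h : ∀ i : Fin n, f.coeff i = g.coeff i) : f = g := by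
  rw [mk_of_monic hf hfn, mk_of_monic hg hgn]; congr 1; funext i; exact h i

/-- multiplication map -/
noncomputable def Phi (k m : ℕ) (x : (Fin k → ℝ) × (Fin m → ℝ)) : Fin (k + m) → ℝ :=
  fun i => (mk k x.1 * mk m x.2).coeff i

lemma Phi_contDiff (k m : ℕ) : ContDiff ℝ ω (Phi k m) := by
  unfold Phi
  rw [contDiff_pi]
  intro i
  simp only [coeff_mul, mk_coeff]
  refine ContDiff.sum fun p _ => ContDiff.mul ?_ ?_
  · refine contDiff_const.add ?_
    split_ifs
    · fun_prop
    · exact contDiff_const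
  · refine contDiff_const.add ?_
    split_ifs
    · fun_prop
    · exact contDiff_const

lemma Phi_fderiv (k m : ℕ) (x w : (Fin k → ℝ) × (Fin m → ℝ)) (i : Fin (k + m)) :
    fderiv ℝ (Phi k m) x w i = (low k w.1 * mk m x.2 + mk k x.1 * low m w.2).coeff i := by
  have hd : HasFDerivAt (Phi k m) (fderiv ℝ (Phi k m) x) x :=
    ((Phi_contDiff k m).differentiable (by simp)).differentiableAt.hasFDerivAt
  have h1 : HasDerivAt (fun t : ℝ => Phi k m (x + t • w)) (fderiv ℝ (Phi k m) x w) 0 :=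
    hd.hasLineDerivAt w
  have h2 := (hasDerivAt_pi.1 h1) i
  have h3 : (fun t : ℝ => Phi k m (x + t • w) i) = fun t : ℝ => (mk k x.1 * mk m x.2).coeff i +
      t * (low k w.1 * mk m x.2 + mk k x.1 * low m w.2).coeff i +
      t ^ 2 * (low k w.1 * low m w.2).coeff i := by
    funext t
    have : mk k (x + t • w).1 * mk m (x + t • w).2 = mk k x.1 * mk m x.2 +
      C t * (low k w.1 * mk m x.2 + mk k x.1 * low m w.2) + C (t ^ 2) * (low k w.1 * low m w.2) := by
      simp only [mk, Prod.fst_add, Prod.snd_add, Prod.smul_fst, Prod.smul_snd, low_add_smul, C_pow]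
      ring
    simp only [Phi, this, coeff_add, coeff_C_mul]
  rw [h3] at h2
  refine h2.unique ?_
  have h4 := (((hasDerivAt_id (0:ℝ)).mul_const
    ((low k w.1 * mk m x.2 + mk k x.1 * low m w.2).coeff i)).const_add
      ((mk k x.1 * mk m x.2).coeff i)).add
      (((hasDerivAt_id (0:ℝ)).pow 2).mul_const ((low k w.1 * low m w.2).coeff i))
  convert! h4 using 1
  simp

lemma low_eq_zero {k : ℕ} {a : Fin k → ℝ} (h : low k a = 0) : a = 0 := by
  funext i
  have := low_coeff k a i
  simpa [h] using this.symm

lemma Phi_inj (k m : ℕ) (x : (Fin k → ℝ) × (Fin m → ℝ)) (hc : IsCoprime (mk k x.1) (mk m x.2)) :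
    Function.Injective (fderiv ℝ (Phi k m) x) := by
  rw [injective_iff_map_eq_zero]
  intro w hw
  have h0 : low k w.1 * mk m x.2 + mk k x.1 * low m w.2 = 0 := by
    ext j
    by_cases hj : j < k + m
    · have := Phi_fderiv k m x w ⟨j, hj⟩
      rw [hw] at this
      simpa using this.symm
    · rw [coeff_zero]
      apply coeff_eq_zero_of_degree_lt
      refine lt_of_lt_of_le (?_ : _ < ((k + m : ℕ) : WithBot ℕ)) (by exact_mod_cast not_lt.1 hj)
      refine lt_of_le_of_lt (degree_add_le _ _) (max_lt ?_ ?_)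
      · rw [degree_mul, mk_degree, Nat.cast_add]
        exact WithBot.add_lt_add_right (by simp) (low_degree _ _)
      · rw [degree_mul, mk_degree, Nat.cast_add]
        exact WithBot.add_lt_add_left (by simp) (low_degree _ _)
  have h1 : low k w.1 = 0 := by
    apply eq_zero_of_dvd_of_degree_lt (p := mk k x.1)
    · refine hc.dvd_of_dvd_mul_right ⟨- low m w.2, ?_⟩
      linear_combination h0
    · rw [mk_degree]; exact low_degree _ _
  have h2 : low m w.2 = 0 := by
    rw [h1, zero_mul, zero_add] at h0
    exact (mul_eq_zero.1 h0).resolve_left (mk_monic _ _).ne_zero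
  exact Prod.ext (low_eq_zero h1) (low_eq_zero h2)

/-- analytic coefficients -/
def AC (p : ℝ → ℝ[X]) (h₀ : ℝ) : Prop := ∀ k, AnalyticAt ℝ (fun h => (p h).coeff k) h₀

lemma hensel (p : ℝ → ℝ[X]) (h₀ : ℝ) (hp : AC p h₀) (k m : ℕ)
    (hmon : ∀ h, (p h).Monic) (hdeg : ∀ h, (p h).natDegree = k + m) (f₀ g₀ : ℝ[X])
    (hf : f₀.Monic) (hg : g₀.Monic) (hfk : f₀.natDegree = k) (hgm : g₀.natDegree = m)
    (hc : IsCoprime f₀ g₀) (hfg : p h₀ = f₀ * g₀) :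
    ∃ f g : ℝ → ℝ[X], (∀ h, (f h).Monic ∧ (f h).natDegree = k) ∧
      (∀ h, (g h).Monic ∧ (g h).natDegree = m) ∧ AC f h₀ ∧ AC g h₀ ∧
      ∀ᶠ h in 𝓝 h₀, p h = f h * g h := by
  set x : (Fin k → ℝ) × (Fin m → ℝ) := (fun i => f₀.coeff i, fun i => g₀.coeff i) with hx
  have hf' : f₀ = mk k x.1 := mk_of_monic hf hfk
  have hg' : g₀ = mk m x.2 := mk_of_monic hg hgm
  have hinj := Phi_inj k m x (by rw [← hf', ← hg']; exact hc)
  let L : ((Fin k → ℝ) × (Fin m → ℝ)) ≃L[ℝ] (Fin (k + m) → ℝ) :=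
    (LinearEquiv.ofInjectiveOfFinrankEq (fderiv ℝ (Phi k m) x : _ →ₗ[ℝ] _) hinj
      (by simp)).toContinuousLinearEquiv
  have hL : HasFDerivAt (Phi k m) (L : _ →L[ℝ] _) x := by
    have hd : HasFDerivAt (Phi k m) (fderiv ℝ (Phi k m) x) x :=
      ((Phi_contDiff k m).differentiable (by simp)).differentiableAt.hasFDerivAt
    convert! hd using 1
  have hcd : ContDiffAt ℝ ω (Phi k m) x := (Phi_contDiff k m).contDiffAt
  have hst := hcd.hasStrictFDerivAt' hL (by simp)
  have hinv : AnalyticAt ℝ (hcd.localInverse hL (by simp)) (Phi k m x) :=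
    (hcd.to_localInverse hL (by simp)).analyticAt
  have hright : ∀ᶠ y in 𝓝 (Phi k m x), Phi k m (hcd.localInverse hL (by simp) y) = y :=
    hst.eventually_right_inverse
  set I := hcd.localInverse hL (by simp) with hI
  let c : ℝ → Fin (k + m) → ℝ := fun h i => (p h).coeff i
  have hcA : AnalyticAt ℝ c h₀ := by
    rw [analyticAt_pi_iff]; exact fun i => hp i
  have hc0 : c h₀ = Phi k m x := by
    funext i; simp only [c, Phi, ← hf', ← hg', hfg]
  have hz : AnalyticAt ℝ (fun h => I (c h)) h₀ := by
    rw [← hc0] at hinv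
    exact hinv.comp hcA
  refine ⟨fun h => mk k (I (c h)).1, fun h => mk m (I (c h)).2,
    fun h => ⟨mk_monic _ _, mk_natDegree _ _⟩, fun h => ⟨mk_monic _ _, mk_natDegree _ _⟩, ?_, ?_, ?_⟩
  · intro j
    simp only [mk_coeff]
    refine analyticAt_const.add ?_
    split_ifs with hj
    · exact (analyticAt_pi_iff.1 (analyticAt_fst.comp hz)) ⟨j, hj⟩
    · exact analyticAt_const
  · intro j
    simp only [mk_coeff]
    refine analyticAt_const.add ?_
    split_ifs with hj
    · exact (analyticAt_pi_iff.1 (analyticAt_snd.comp hz)) ⟨j, hj⟩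
    · exact analyticAt_const
  · have hcc : Tendsto c (𝓝 h₀) (𝓝 (Phi k m x)) := by
      rw [← hc0]; exact hcA.continuousAt
    filter_upwards [hcc.eventually hright] with h hh
    refine monic_ext (hmon h) ((mk_monic _ _).mul (mk_monic _ _)) (hdeg h) ?_ ?_
    · rw [(mk_monic _ _).natDegree_mul (mk_monic _ _), mk_natDegree, mk_natDegree]
    · intro i
      exact (congrFun hh i).symm

end Rellich


namespace Rellich

noncomputable def P {n : ℕ} (r : Fin n → ℝ) : ℝ[X] := ∏ i, (X - C (r i))

lemma P_monic {n : ℕ} (r : Fin n → ℝ) : (P r).Monic := monic_prod_of_monic _ _ fun _ _ => monic_X_sub_C _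

lemma P_natDegree {n : ℕ} (r : Fin n → ℝ) : (P r).natDegree = n := by
  unfold P; rw [natDegree_prod_of_monic _ _ fun i _ => monic_X_sub_C _]; simp

lemma P_roots {n : ℕ} (r : Fin n → ℝ) : (P r).roots = Finset.univ.val.map r := by
  have : P r = ((Finset.univ.val.map r).map fun a => X - C a).prod := by
    rw [Multiset.map_map]; rfl
  rw [this, roots_multiset_prod_X_sub_C]

lemma P_eq_of_map {n : ℕ} {x y : Fin n → ℝ} (h : Finset.univ.val.map x = Finset.univ.val.map y) :
    P x = P y := by
  have : ∀ r : Fin n → ℝ, P r = ((Finset.univ.val.map r).map fun a => X - C a).prod := by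
    intro r; rw [Multiset.map_map]; rfl
  rw [this, this, h]

lemma P_affine {n : ℕ} {x y : Fin n → ℝ} (h : P x = P y) (a b : ℝ) :
    P (fun i => a + b * x i) = P (fun i => a + b * y i) := by
  apply P_eq_of_map
  have h1 : Finset.univ.val.map x = Finset.univ.val.map y := by rw [← P_roots, ← P_roots, h]
  have := congrArg (Multiset.map fun z => a + b * z) h1
  simpa [Multiset.map_map, Function.comp_def] using this

lemma P_of_splits {n : ℕ} {f : ℝ[X]} (hf : f.Monic) (hn : f.natDegree = n) (hs : f.Splits) :
    ∃ r : Fin n → ℝ, f = P r := by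
  have hcard : f.roots.card = n := by rw [← hn, ← hs.natDegree_eq_card_roots]
  have hl : f.roots.toList.length = n := by simpa using hcard
  subst hl
  refine ⟨fun i => f.roots.toList.get i, ?_⟩
  conv_lhs => rw [hs.eq_prod_roots_of_monic hf]
  rw [P]
  conv_lhs => rw [← Multiset.coe_toList f.roots]
  rw [Multiset.map_coe, Multiset.prod_coe, ← List.prod_ofFn]
  congr 1
  apply List.ext_get <;> simp

lemma P_scale {n : ℕ} (y : Fin n → ℝ) (b : ℝ) (k : ℕ) :
    (P (fun i => b * y i)).coeff k = b ^ (n - k) * (P y).coeff k := by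
  have h : P (fun i => b * y i) = (P y).scaleRoots b := by
    unfold P
    induction (Finset.univ : Finset (Fin n)) using Finset.induction_on with
    | empty => simp
    | insert a s ha ih =>
      rw [Finset.prod_insert ha, Finset.prod_insert ha, ih, mul_scaleRoots_of_noZeroDivisors,
        X_sub_C_scaleRoots, mul_comm (y a) b]
  rw [h, coeff_scaleRoots, P_natDegree, mul_comm]

lemma P_shift {n : ℕ} (y : Fin n → ℝ) (s : ℝ) :
    P (fun i => y i - s) = ∑ j ∈ Finset.range (n + 1), C ((P y).coeff j) * (X + C s) ^ j := by
  have h1 : P (fun i => y i - s) = (P y).comp (X + C s) := by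
    simp only [P, prod_comp]
    refine Finset.prod_congr rfl fun i _ => ?_
    simp; ring
  rw [h1]
  conv_lhs => rw [(P y).as_sum_range_C_mul_X_pow' (n := n + 1) (by rw [P_natDegree]; omega)]
  simp

lemma AC.congr {p q : ℝ → ℝ[X]} {h₀ : ℝ} (hp : AC p h₀) (h : ∀ᶠ x in 𝓝 h₀, p x = q x) : AC q h₀ :=
  fun k => (hp k).congr (h.mono fun x hx => by simp only [hx])

lemma AC.add {p q : ℝ → ℝ[X]} {h₀ : ℝ} (hp : AC p h₀) (hq : AC q h₀) :
    AC (fun h => p h + q h) h₀ := fun k => by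
  simp only [coeff_add]; exact (hp k).add (hq k)

lemma AC.mul {p q : ℝ → ℝ[X]} {h₀ : ℝ} (hp : AC p h₀) (hq : AC q h₀) :
    AC (fun h => p h * q h) h₀ := fun k => by
  simp only [coeff_mul]
  exact Finset.analyticAt_fun_sum _ fun i _ => (hp i.1).mul (hq i.2)

lemma AC_const (p : ℝ[X]) (h₀ : ℝ) : AC (fun _ => p) h₀ := fun _ => analyticAt_const

lemma AC_C {f : ℝ → ℝ} {h₀ : ℝ} (hf : AnalyticAt ℝ f h₀) : AC (fun h => C (f h)) h₀ := fun k => by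
  simp only [coeff_C]
  split_ifs
  · exact hf
  · exact analyticAt_const

lemma AC.pow {p : ℝ → ℝ[X]} {h₀ : ℝ} (hp : AC p h₀) (j : ℕ) : AC (fun h => p h ^ j) h₀ := by
  induction j with
  | zero => simpa using AC_const 1 h₀
  | succ j ih => simp only [pow_succ]; exact ih.mul hp

lemma AC_sum {ι : Type*} (s : Finset ι) (p : ι → ℝ → ℝ[X]) {h₀ : ℝ} (hp : ∀ i, AC (p i) h₀) :
    AC (fun h => ∑ i ∈ s, p i h) h₀ := fun k => by
  simp only [finsetSum_coeff]
  exact Finset.analyticAt_fun_sum _ fun i _ => hp i k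

lemma AC_prod {ι : Type*} (s : Finset ι) (p : ι → ℝ → ℝ[X]) {h₀ : ℝ} (hp : ∀ i, AC (p i) h₀) :
    AC (fun h => ∏ i ∈ s, p i h) h₀ := by
  classical
  induction s using Finset.induction_on with
  | empty => simpa using AC_const 1 h₀
  | insert a s ha ih => simp only [Finset.prod_insert ha]; exact (hp a).mul ih

lemma AC_P {n : ℕ} {lam : Fin n → ℝ → ℝ} {h₀ : ℝ} (h : ∀ i, AnalyticAt ℝ (lam i) h₀) :
    AC (fun t => P fun i => lam i t) h₀ := by
  unfold P
  refine AC_prod _ _ fun i => ?_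
  simp only [sub_eq_add_neg, ← C_neg]
  exact (AC_const X h₀).add (AC_C (h i).neg)

lemma AC_shift {n : ℕ} {r : Fin n → ℝ → ℝ} {s : ℝ → ℝ} {h₀ : ℝ}
    (h : AC (fun t => P fun i => r i t) h₀) (hs : AnalyticAt ℝ s h₀) :
    AC (fun t => P fun i => r i t - s t) h₀ := by
  simp only [P_shift]
  exact AC_sum _ _ fun j => (AC_C (h j)).mul (((AC_const X h₀).add (AC_C hs)).pow j)

lemma newton {n : ℕ} (y : Fin n → ℝ) :
    ∑ i, y i = - (X ^ 2 * P y).coeff (n + 1) ∧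
    ∑ i, y i ^ 2 = (X ^ 2 * P y).coeff (n + 1) ^ 2 - 2 * (X ^ 2 * P y).coeff n := by
  have key : (X ^ 2 * P y).coeff (n + 2) = 1 ∧ ∑ i, y i = - (X ^ 2 * P y).coeff (n + 1) ∧
    ∑ i, y i ^ 2 = (X ^ 2 * P y).coeff (n + 1) ^ 2 - 2 * (X ^ 2 * P y).coeff n := by
    induction n with
    | zero => simp [P, coeff_X_pow]
    | succ n ih =>
      obtain ⟨h1, h2, h3⟩ := ih fun i => y i.castSucc
      have e : X ^ 2 * P y = (X ^ 2 * P fun i => y i.castSucc) * (X - C (y (Fin.last n))) := by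
        simp only [P, Fin.prod_univ_castSucc]; ring
      rw [e, Fin.sum_univ_castSucc, Fin.sum_univ_castSucc, h2, h3]
      rw [show n + 1 + 2 = (n + 2) + 1 by ring, coeff_mul_X_sub_C, coeff_mul_X_sub_C,
        coeff_mul_X_sub_C, h1, coeff_eq_zero_of_natDegree_lt (n := n + 2 + 1)]
      · refine ⟨by ring, by ring, by ring⟩
      · rw [Monic.natDegree_mul (monic_X_pow 2) (P_monic _), P_natDegree]; simp; omega
  exact key.2

lemma sum_analytic {n : ℕ} {r : Fin n → ℝ → ℝ} {h₀ : ℝ}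
    (h : AC (fun t => P fun i => r i t) h₀) :
    AnalyticAt ℝ (fun t => ∑ i, r i t) h₀ ∧ AnalyticAt ℝ (fun t => ∑ i, r i t ^ 2) h₀ := by
  have h' := (AC_const (X ^ 2) h₀).mul h
  constructor
  · simp only [fun t => (newton fun i => r i t).1]
    exact (h' _).neg
  · simp only [fun t => (newton fun i => r i t).2]
    exact ((h' _).pow 2).sub (analyticAt_const.mul (h' _))

/-- division of analytic functions -/
lemma divide {f : ℝ → ℝ} {h₀ : ℝ} (hf : AnalyticAt ℝ f h₀) (j : ℕ) (M : ℝ)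
    (hb : ∀ᶠ h in 𝓝[≠] h₀, |f h| ≤ M * |h - h₀| ^ j) :
    ∃ g : ℝ → ℝ, AnalyticAt ℝ g h₀ ∧ ∀ᶠ h in 𝓝 h₀, f h = (h - h₀) ^ j * g h := by
  have key : (j : ℕ∞) ≤ analyticOrderAt f h₀ := by
    by_contra hlt
    push Not at hlt
    obtain ⟨q, hq⟩ := ENat.ne_top_iff_exists.1 (ne_top_of_lt hlt)
    rw [← hq] at hlt
    have hlt' : q < j := by exact_mod_cast hlt
    obtain ⟨g, hg, hg0, hfg⟩ := (hf.analyticOrderAt_eq_natCast).1 hq.symm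
    have hle : ∀ᶠ h in 𝓝[≠] h₀, |g h| ≤ M * |h - h₀| ^ (j - q) := by
      filter_upwards [hb, hfg.filter_mono nhdsWithin_le_nhds, self_mem_nhdsWithin] with h h1 h2 h3
      have hpos : 0 < |h - h₀| := abs_pos.2 (sub_ne_zero.2 h3)
      rw [h2, smul_eq_mul, abs_mul, abs_pow] at h1
      have e : |h - h₀| ^ j = |h - h₀| ^ q * |h - h₀| ^ (j - q) := by
        rw [← pow_add]; congr 1; omega
      rw [e] at h1
      refine le_of_mul_le_mul_left ?_ (pow_pos hpos q)
      linarith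
    have t1 : Tendsto (fun h => |g h|) (𝓝[≠] h₀) (𝓝 |g h₀|) :=
      (hg.continuousAt.abs.tendsto).mono_left nhdsWithin_le_nhds
    have t2 : Tendsto (fun h => M * |h - h₀| ^ (j - q)) (𝓝[≠] h₀) (𝓝 (M * |h₀ - h₀| ^ (j - q))) := by
      refine Tendsto.mono_left ?_ nhdsWithin_le_nhds
      exact (by fun_prop : Continuous fun h : ℝ => M * |h - h₀| ^ (j - q)).tendsto h₀
    have := le_of_tendsto_of_tendsto t1 t2 hle
    rw [sub_self, abs_zero, zero_pow (by omega), mul_zero] at this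
    exact hg0 (abs_nonpos_iff.1 this)
  obtain ⟨g, hg, h⟩ := (natCast_le_analyticOrderAt hf).1 key
  exact ⟨g, hg, h⟩

lemma even_order {g : ℝ → ℝ} {h₀ : ℝ} (hg : AnalyticAt ℝ g h₀) (hg0 : g h₀ ≠ 0) (q : ℕ)
    (h : ∀ᶠ h in 𝓝 h₀, 0 ≤ (h - h₀) ^ q * g h) : Even q := by
  by_contra hq
  rw [Nat.not_even_iff_odd] at hq
  have a1 : 0 ≤ g h₀ := by
    refine ge_of_tendsto ((hg.continuousAt.tendsto).mono_left (nhdsWithin_le_nhds (s := Set.Ioi h₀))) ?_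
    filter_upwards [h.filter_mono nhdsWithin_le_nhds, self_mem_nhdsWithin] with x hx hx2
    exact nonneg_of_mul_nonneg_right hx (pow_pos (sub_pos.2 hx2) q)
  have a2 : g h₀ ≤ 0 := by
    refine le_of_tendsto ((hg.continuousAt.tendsto).mono_left (nhdsWithin_le_nhds (s := Set.Iio h₀))) ?_
    filter_upwards [h.filter_mono nhdsWithin_le_nhds, self_mem_nhdsWithin] with x hx hx2
    have : (x - h₀) ^ q < 0 := hq.pow_neg (sub_neg.2 hx2)
    by_contra hc
    nlinarith
  exact hg0 (le_antisymm a2 a1)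

lemma P_coeff_continuous (n k : ℕ) : Continuous fun y : Fin n → ℝ => (P y).coeff k := by
  have : ∀ s : Finset (Fin n), ∀ k, Continuous fun y : Fin n → ℝ => (∏ i ∈ s, (X - C (y i))).coeff k := by
    intro s
    induction s using Finset.induction_on with
    | empty => intro k; simpa using continuous_const
    | insert a s ha ih =>
      intro k
      simp only [Finset.prod_insert ha, coeff_mul]
      refine continuous_finsetSum _ fun p _ => Continuous.mul ?_ (ih _)
      simp only [coeff_sub, coeff_C]
      split_ifs <;> fun_prop
  exact this _ k

lemma limit_roots {n : ℕ} (y : Fin n → ℝ → ℝ) (h₀ M : ℝ) (G : ℕ → ℝ)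
    (hb : ∀ᶠ h in 𝓝[≠] h₀, ∀ i, |y i h| ≤ M)
    (hG : ∀ k, Tendsto (fun h => (P fun i => y i h).coeff k) (𝓝[≠] h₀) (𝓝 (G k))) :
    ∃ ρ : Fin n → ℝ, ∀ k, (P ρ).coeff k = G k := by
  let F : (Fin n → ℝ) → ℕ → ℝ := fun z k => (P z).coeff k
  have hF : Continuous F := continuous_pi fun k => P_coeff_continuous n k
  have hK : IsCompact (F '' Set.pi Set.univ fun _ => Set.Icc (-M) M) :=
    (isCompact_univ_pi fun _ => isCompact_Icc).image hF
  have hT : Tendsto (fun h => F fun i => y i h) (𝓝[≠] h₀) (𝓝 G) := tendsto_pi_nhds.2 hG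
  obtain ⟨ρ, _, hρ⟩ := hK.isClosed.mem_of_tendsto hT
    (hb.mono fun h hh => ⟨_, fun i _ => abs_le.1 (hh i), rfl⟩)
  exact ⟨ρ, fun k => congrFun hρ k⟩

lemma coeff_bound (n k : ℕ) (M : ℝ) : ∃ B : ℝ, ∀ y : Fin n → ℝ, (∀ i, |y i| ≤ M) →
    |(P y).coeff k| ≤ B := by
  obtain ⟨B, hB⟩ := (isCompact_univ_pi fun _ : Fin n => isCompact_Icc (a := -M) (b := M)).exists_bound_of_continuousOn
    (P_coeff_continuous n k).continuousOn
  exact ⟨B, fun y hy => hB y fun i _ => abs_le.1 (hy i)⟩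

end Rellich


namespace Rellich

/-- the conclusion, for a family of monic polynomials -/
def Good (n : ℕ) (h₀ : ℝ) (p : ℝ → ℝ[X]) : Prop :=
  ∃ lam : Fin n → ℝ → ℝ, (∀ i, AnalyticAt ℝ (lam i) h₀) ∧
    ∀ᶠ h in 𝓝 h₀, p h = P fun i => lam i h

lemma Good.mul {k m n : ℕ} (hn : k + m = n) {h₀ : ℝ} {p q : ℝ → ℝ[X]} (hp : Good k h₀ p)
    (hq : Good m h₀ q) : Good n h₀ (fun h => p h * q h) := by
  subst hn
  obtain ⟨a, ha, ha'⟩ := hp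
  obtain ⟨b, hb, hb'⟩ := hq
  refine ⟨Fin.append a b, fun i => ?_, ?_⟩
  · refine Fin.addCases (fun i => ?_) (fun i => ?_) i
    · simpa using ha i
    · simpa using hb i
  · filter_upwards [ha', hb'] with h h1 h2
    rw [h1, h2]
    simp [P, Fin.prod_univ_add]

lemma Good.congr {n : ℕ} {h₀ : ℝ} {p q : ℝ → ℝ[X]} (hp : Good n h₀ p)
    (h : ∀ᶠ x in 𝓝 h₀, q x = p x) : Good n h₀ q := by
  obtain ⟨a, ha, ha'⟩ := hp
  exact ⟨a, ha, by filter_upwards [h, ha'] with x h1 h2; rw [h1, h2]⟩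

lemma good_of_splits {k : ℕ} {h₀ : ℝ} (IH : ∀ r : Fin k → ℝ → ℝ,
      AC (fun t => P fun i => r i t) h₀ → Good k h₀ (fun t => P fun i => r i t))
    {f : ℝ → ℝ[X]} (hf : ∀ h, (f h).Monic ∧ (f h).natDegree = k) (hA : AC f h₀)
    (hs : ∀ᶠ h in 𝓝 h₀, (f h).Splits) : Good k h₀ f := by
  have hex : ∀ h, ∃ r : Fin k → ℝ, (f h).Splits → f h = P r := by
    intro h
    by_cases hsp : (f h).Splits
    · obtain ⟨r, hr⟩ := P_of_splits (hf h).1 (hf h).2 hsp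
      exact ⟨r, fun _ => hr⟩
    · exact ⟨0, fun h => absurd h hsp⟩
  choose r hr using hex
  have he : ∀ᶠ h in 𝓝 h₀, f h = P (r h) := hs.mono fun h hh => hr h hh
  exact (IH (fun i h => r h i) (hA.congr he)).congr he

lemma split {n : ℕ} {h₀ : ℝ} (IH : ∀ k < n, ∀ r : Fin k → ℝ → ℝ,
      AC (fun t => P fun i => r i t) h₀ → Good k h₀ (fun t => P fun i => r i t))
    (r : Fin n → ℝ → ℝ) (hr : AC (fun t => P fun i => r i t) h₀) (i₀ j₀ : Fin n)
    (hij : r i₀ h₀ ≠ r j₀ h₀) : Good n h₀ (fun t => P fun i => r i t) := by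
  classical
  set S := Finset.univ.filter fun i => r i h₀ = r i₀ h₀ with hS
  set T := Finset.univ.filter fun i => ¬ r i h₀ = r i₀ h₀ with hT
  have hST : S.card + T.card = n := by
    have := Finset.card_filter_add_card_filter_not (s := (Finset.univ : Finset (Fin n)))
      (fun i => r i h₀ = r i₀ h₀)
    simpa using this
  have hSpos : 0 < S.card := Finset.card_pos.2 ⟨i₀, by simp [hS]⟩
  have hTpos : 0 < T.card := Finset.card_pos.2 ⟨j₀, by simp [hT, hij.symm]⟩
  have hmon : ∀ U : Finset (Fin n), (∏ i ∈ U, (X - C (r i h₀))).Monic := fun U =>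
    monic_prod_of_monic _ _ fun _ _ => monic_X_sub_C _
  have hdeg : ∀ U : Finset (Fin n), (∏ i ∈ U, (X - C (r i h₀))).natDegree = U.card := fun U => by
    rw [natDegree_prod_of_monic _ _ fun _ _ => monic_X_sub_C _]; simp
  obtain ⟨f, g, hf, hg, hfA, hgA, hfg⟩ := hensel (fun t => P fun i => r i t) h₀ hr S.card T.card
    (fun h => P_monic _) (fun h => by rw [P_natDegree, hST])
    (∏ i ∈ S, (X - C (r i h₀))) (∏ i ∈ T, (X - C (r i h₀))) (hmon S) (hmon T) (hdeg S) (hdeg T)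
    (by
      refine IsCoprime.prod_left fun i hi => IsCoprime.prod_right fun j hj => ?_
      refine isCoprime_X_sub_C_of_isUnit_sub ?_
      rw [isUnit_iff_ne_zero, sub_ne_zero]
      simp only [hS, hT, Finset.mem_filter, Finset.mem_univ, true_and] at hi hj
      rw [hi]; exact fun e => hj e.symm)
    (by simp only [P]; exact (Finset.prod_filter_mul_prod_filter_not _ _ _).symm)
  have hsp : ∀ h, (P fun i => r i h).Splits := fun h => Splits.prod fun i _ => Splits.X_sub_C _
  have hF := good_of_splits (IH _ (by omega)) hf hfA
    (hfg.mono fun h hh => (hsp h).of_dvd (P_monic _).ne_zero (hh ▸ dvd_mul_right _ _))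
  have hG := good_of_splits (IH _ (by omega)) hg hgA
    (hfg.mono fun h hh => (hsp h).of_dvd (P_monic _).ne_zero (hh ▸ dvd_mul_left _ _))
  exact (hF.mul hST hG).congr hfg

lemma AC.eventually_eq {n : ℕ} {h₀ : ℝ} {p q : ℝ → Fin n → ℝ} (hp : AC (fun h => P (p h)) h₀)
    (hq : AC (fun h => P (q h)) h₀) (h : ∀ᶠ x in 𝓝[≠] h₀, P (p x) = P (q x)) :
    ∀ᶠ x in 𝓝 h₀, P (p x) = P (q x) := by
  have h0 : P (p h₀) = P (q h₀) := by
    ext k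
    refine tendsto_nhds_unique (((hp k).continuousAt.tendsto).mono_left nhdsWithin_le_nhds :
      Tendsto _ (𝓝[≠] h₀) _) ?_
    refine Tendsto.congr' ?_ (((hq k).continuousAt.tendsto).mono_left nhdsWithin_le_nhds)
    exact h.mono fun x hx => by simp only [hx]
  rw [eventually_nhdsWithin_iff] at h
  filter_upwards [h] with x hx
  by_cases e : x = h₀
  · rw [e, h0]
  · exact hx e

theorem main (h₀ : ℝ) (n : ℕ) : ∀ r : Fin n → ℝ → ℝ,
      AC (fun t => P fun i => r i t) h₀ → Good n h₀ (fun t => P fun i => r i t) := by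
  induction n using Nat.strong_induction_on with
  | _ n IH =>
  intro r hr
  rcases Nat.eq_zero_or_pos n with hn | hn
  · subst hn
    exact ⟨fun _ _ => 0, fun i => analyticAt_const, Eventually.of_forall fun h => by simp [P]⟩
  have hn0 : (n : ℝ) ≠ 0 := by positivity
  let s : ℝ → ℝ := fun t => (∑ i, r i t) / n
  have hs : AnalyticAt ℝ s h₀ := (sum_analytic hr).1.div analyticAt_const hn0
  have hy : AC (fun t => P fun i => r i t - s t) h₀ := AC_shift hr hs
  have hsum : ∀ t, ∑ i, (r i t - s t) = 0 := by
    intro t; simp [Finset.sum_sub_distrib, s]; field_simp; simp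
  have hσ := (sum_analytic hy).2
  by_cases htop : analyticOrderAt (fun t => ∑ i, (r i t - s t) ^ 2) h₀ = ⊤
  · rw [analyticOrderAt_eq_top] at htop
    refine ⟨fun _ => s, fun _ => hs, ?_⟩
    filter_upwards [htop] with t ht
    congr 1
    funext i
    have := (Finset.sum_eq_zero_iff_of_nonneg (fun i _ => sq_nonneg _)).1 ht i (Finset.mem_univ i)
    exact sub_eq_zero.1 (pow_eq_zero_iff (two_ne_zero)|>.1 this)
  obtain ⟨q, hq⟩ := ENat.ne_top_iff_exists.1 htop
  obtain ⟨g, hg, hg0, hgq⟩ := (hσ.analyticOrderAt_eq_natCast).1 hq.symm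
  simp only [smul_eq_mul] at hgq
  obtain ⟨m, hm⟩ := even_order hg hg0 q (hgq.mono fun h hh => by
    rw [← hh]; exact Finset.sum_nonneg fun i _ => sq_nonneg _)
  -- rescaled roots
  let y : Fin n → ℝ → ℝ := fun i h => (r i h - s h) / (h - h₀) ^ m
  have hyr : ∀ h, h ≠ h₀ → ∀ i, r i h - s h = (h - h₀) ^ m * y i h := by
    intro h hh i
    have : (h - h₀) ^ m ≠ 0 := pow_ne_zero _ (sub_ne_zero.2 hh)
    simp only [y]; field_simp
  have hysq : ∀ᶠ h in 𝓝[≠] h₀, ∑ i, y i h ^ 2 = g h := by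
    filter_upwards [hgq.filter_mono nhdsWithin_le_nhds, self_mem_nhdsWithin] with h h1 h2
    have h3 : (h - h₀) ^ q ≠ 0 := pow_ne_zero _ (sub_ne_zero.2 h2)
    apply mul_left_cancel₀ h3
    rw [← h1, Finset.mul_sum]
    refine Finset.sum_congr rfl fun i _ => ?_
    rw [hyr h h2 i, hm, mul_pow, ← pow_mul, mul_two]
  obtain ⟨M, hM⟩ : ∃ M : ℝ, ∀ᶠ h in 𝓝[≠] h₀, ∀ i, |y i h| ≤ M := by
    refine ⟨|g h₀| + 1 + 1, ?_⟩
    have hgb : ∀ᶠ h in 𝓝[≠] h₀, |g h| < |g h₀| + 1 :=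
      ((hg.continuousAt.abs.tendsto).mono_left nhdsWithin_le_nhds).eventually_lt_const (by linarith)
    filter_upwards [hysq, hgb] with h h1 h2 i
    have h3 : y i h ^ 2 ≤ ∑ i, y i h ^ 2 :=
      Finset.single_le_sum (f := fun i => y i h ^ 2) (fun i _ => sq_nonneg _) (Finset.mem_univ i)
    have h4 := le_abs_self (g h)
    have h5 := sq_abs (y i h)
    nlinarith [abs_nonneg (y i h), abs_nonneg (g h₀)]
  have hGex : ∀ k, ∃ G : ℝ → ℝ, AnalyticAt ℝ G h₀ ∧
      ∀ᶠ h in 𝓝[≠] h₀, (P fun i => y i h).coeff k = G h := by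
    intro k
    have hsc : ∀ h, h ≠ h₀ → (P fun i => r i h - s h).coeff k =
        (h - h₀) ^ (m * (n - k)) * (P fun i => y i h).coeff k := by
      intro h hh
      rw [show (fun i => r i h - s h) = fun i => (h - h₀) ^ m * y i h from funext (hyr h hh),
        P_scale, pow_mul]
    obtain ⟨B, hB⟩ := coeff_bound n k M
    obtain ⟨G, hG, hG'⟩ := divide (hy k) (m * (n - k)) B (by
      filter_upwards [hM, self_mem_nhdsWithin] with h h1 h2
      rw [hsc h h2, abs_mul, abs_pow, mul_comm]
      exact mul_le_mul_of_nonneg_right (hB _ h1) (by positivity))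
    refine ⟨G, hG, ?_⟩
    filter_upwards [hG'.filter_mono nhdsWithin_le_nhds, self_mem_nhdsWithin] with h h1 h2
    rw [hsc h h2] at h1
    exact mul_left_cancel₀ (pow_ne_zero _ (sub_ne_zero.2 h2)) h1
  choose G hG hG' using hGex
  obtain ⟨ρ, hρ⟩ := limit_roots y h₀ M (fun k => G k h₀) hM fun k =>
    (((hG k).continuousAt.tendsto).mono_left nhdsWithin_le_nhds).congr' (by
      filter_upwards [hG' k] with h hh using hh.symm)
  let z : Fin n → ℝ → ℝ := fun i h => if h = h₀ then ρ i else y i h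
  have hz0 : ∀ i, z i h₀ = ρ i := fun i => by simp [z]
  have hz : ∀ h, h ≠ h₀ → ∀ i, z i h = y i h := fun h hh i => by simp [z, hh]
  have hzA : AC (fun t => P fun i => z i t) h₀ := by
    intro k
    refine (hG k).congr ?_
    have := hG' k
    rw [eventually_nhdsWithin_iff] at this
    filter_upwards [this] with h hh
    by_cases e : h = h₀
    · subst e; simp only [hz0]; exact (hρ k).symm
    · simp only [hz h e]; exact (hh e).symm
  obtain ⟨hz1, hz2⟩ := sum_analytic hzA
  have e1 : ∑ i, z i h₀ = 0 := by
    refine tendsto_nhds_unique ((hz1.continuousAt.tendsto).mono_left nhdsWithin_le_nhds :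
      Tendsto _ (𝓝[≠] h₀) _) (tendsto_const_nhds.congr' ?_)
    filter_upwards [self_mem_nhdsWithin] with h hh
    simp only [hz h hh, y, ← Finset.sum_div, hsum, zero_div]
  have e2 : ∑ i, z i h₀ ^ 2 = g h₀ := by
    refine tendsto_nhds_unique ((hz2.continuousAt.tendsto).mono_left nhdsWithin_le_nhds :
      Tendsto _ (𝓝[≠] h₀) _)
      (((hg.continuousAt.tendsto).mono_left nhdsWithin_le_nhds).congr' ?_)
    filter_upwards [hysq, self_mem_nhdsWithin] with h h1 hh
    simp only [hz h hh, h1]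
  have hne : ∃ i j, z i h₀ ≠ z j h₀ := by
    by_contra hcon
    push Not at hcon
    have hc : ∀ i, z i h₀ = 0 := by
      intro i
      rw [Finset.sum_congr rfl fun j _ => hcon j i] at e1
      simpa [hn.ne'] using e1
    apply hg0
    rw [← e2]
    simp [hc]
  obtain ⟨i, j, hij⟩ := hne
  obtain ⟨mu, hmu, hmu'⟩ := split IH z hzA i j hij
  have hl : ∀ i, AnalyticAt ℝ (fun h => s h + (h - h₀) ^ m * mu i h) h₀ := fun i =>
    hs.add (((analyticAt_id.sub analyticAt_const).pow m).mul (hmu i))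
  refine ⟨fun i h => s h + (h - h₀) ^ m * mu i h, hl, ?_⟩
  refine AC.eventually_eq hr (AC_P hl) ?_
  filter_upwards [hmu'.filter_mono nhdsWithin_le_nhds, self_mem_nhdsWithin] with h h1 h2
  rw [← P_affine h1]
  congr 1
  funext i
  rw [hz h h2, ← hyr h h2]; ring

end Rellich

open Rellich in
theorem hermitian_analytic_eigenvalues (N : ℕ) (A : ℝ → Matrix (Fin N) (Fin N) ℂ)
    (hA : ∀ i j : Fin N, ∀ x : ℝ, AnalyticAt ℝ (fun h => A h i j) x)
    (hherm : ∀ h : ℝ, (A h).IsHermitian) (h₀ : ℝ) :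
    ∃ ε > (0:ℝ), ∃ lam : Fin N → ℝ → ℝ,
      (∀ i : Fin N, ∀ h ∈ Set.Ioo (h₀ - ε) (h₀ + ε), AnalyticAt ℝ (lam i) h) ∧
      ∀ h ∈ Set.Ioo (h₀ - ε) (h₀ + ε),
        (A h).charpoly = ∏ i : Fin N, (Polynomial.X - Polynomial.C ((lam i h : ℝ) : ℂ)) := by
  have hmap : ∀ y : Fin N → ℝ, (P y).map Complex.ofRealHom =
      ∏ i, (Polynomial.X - Polynomial.C ((y i : ℝ) : ℂ)) := by
    intro y; simp [P, Polynomial.map_prod]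
  let r : Fin N → ℝ → ℝ := fun i h => (hherm h).eigenvalues i
  have hchar : ∀ h, (A h).charpoly = (P fun i => r i h).map Complex.ofRealHom := by
    intro h; rw [hmap, (hherm h).charpoly_eq]; rfl
  have hcoef : ∀ k, AnalyticAt ℝ (fun h => ((A h).charpoly).coeff k) h₀ := by
    intro k
    have : ∀ h, (A h).charpoly.coeff k =
        MvPolynomial.eval (fun p : Fin N × Fin N => A h p.1 p.2)
          ((Matrix.charpoly.univ ℂ (Fin N)).coeff k) := by
      intro h
      exact (Matrix.charpoly.univ_coeff_eval₂Hom (Fin N) (RingHom.id ℂ)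
        (fun p : Fin N × Fin N => A h p.1 p.2) k).symm
    simp only [this]
    induction (Matrix.charpoly.univ ℂ (Fin N)).coeff k using MvPolynomial.induction_on with
    | C a => simpa using analyticAt_const
    | add p q hp hq => simp only [map_add]; exact hp.add hq
    | mul_X p i hp => simp only [map_mul, MvPolynomial.eval_X]; exact hp.mul (hA _ _ _)
  have hAC : AC (fun t => P fun i => r i t) h₀ := by
    intro k
    have := (Complex.reCLM.analyticAt _).comp (hcoef k)
    refine this.congr (Eventually.of_forall fun h => ?_)
    simp [hchar]
  obtain ⟨lam, hlam, he⟩ := main h₀ N r hAC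
  have hall : ∀ᶠ h in 𝓝 h₀, (∀ i, AnalyticAt ℝ (lam i) h) ∧ (P fun i => r i h) = P fun i => lam i h :=
    (eventually_all.2 fun i => (hlam i).eventually_analyticAt).and he
  obtain ⟨ε, hε, hb⟩ := Metric.eventually_nhds_iff_ball.1 hall
  rw [Real.ball_eq_Ioo] at hb
  refine ⟨ε, hε, lam, fun i h hh => (hb h hh).1 i, fun h hh => ?_⟩
  rw [hchar, (hb h hh).2, hmap]
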